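/- Let α_x ≥ 0, α_p > 0, σ_μ ≥ 0, γ > 0, σ_ε > 0, set α_z = α_x²/(γ²·σ_ε²), α = α_x + α_p + α_z and α_ψ = α²/(α_x + α_p²·σ_μ²). If √(α_x/(α_p + α_z)² + σ_μ²/(1 + α_z/α_p)²) ≥ 1/√(2π), then for every Z ∈ ℝ, x_c ∈ ℝ and m ∈ ℝ the equation Φ(√α_ψ·(((α_z + α_p)/α)·θ − (α_z/α)·Z − (α_p/α)·m − x_c/√α)) = θ has exactly one real solution θ*, and θ* ∈ (0,1). -/

import Mathlib

/-- The standard normal cumulative distribution function. -/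
noncomputable def stdNormalCDF (x : ℝ) : ℝ :=
  ∫ t in Set.Iic x, (Real.sqrt (2 * Real.pi))⁻¹ * Real.exp (-t ^ 2 / 2)

/-!
The equation reads `Φ (s * θ + b) = θ`, where the slope `s` is the reciprocal of the left-hand side
of the uniqueness condition, so the condition says `s ≤ √(2π)`. Away from its peak the Gaussian
density is strictly below `1 / √(2π)`; hence `θ - Φ (s * θ + b)` is strictly increasing, even in the
critical case `s = √(2π)`. Existence is the intermediate value theorem, as `0 < Φ < 1`.
-/

open MeasureTheory ProbabilityTheory Set
open scoped NNReal Real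

section FixedPoint

variable {f : ℝ → ℝ}

theorem exists_mem_Ioo_unique_fixedPoint {a b : ℝ} (hf : Continuous f)
    (hmem : ∀ x, f x ∈ Ioo a b) (hinj : Function.Injective fun x ↦ x - f x) :
    ∃ x ∈ Ioo a b, f x = x ∧ ∀ y, f y = y → y = x := by
  have hab : a ≤ b := ((hmem a).1.trans (hmem a).2).le
  obtain ⟨x, -, hx⟩ := exists_mem_Icc_isFixedPt hf.continuousOn hab (hmem a).1.le (hmem b).2.le
  refine ⟨x, hx.eq ▸ hmem x, hx, fun y hy ↦ hinj ?_⟩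
  simp only [hy, hx.eq, sub_self]

theorem strictMono_sub_comp_affine {K s : ℝ} (hf : Monotone f)
    (hlt : ∀ ⦃x y⦄, x < y → f y - f x < K * (y - x)) (hs : s * K ≤ 1) (b : ℝ) :
    StrictMono fun x ↦ x - f (s * x + b) := by
  intro x y hxy
  suffices f (s * y + b) - f (s * x + b) < y - x by linarith
  rcases le_or_gt s 0 with hs_nonpos | hs_pos
  · have hanti : f (s * y + b) ≤ f (s * x + b) :=
      hf (by linarith [mul_le_mul_of_nonpos_left hxy.le hs_nonpos])
    linarith
  · calc f (s * y + b) - f (s * x + b)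
        < K * ((s * y + b) - (s * x + b)) := hlt (by gcongr)
      _ = s * K * (y - x) := by ring
      _ ≤ y - x := mul_le_of_le_one_left (sub_nonneg.2 hxy.le) hs

end FixedPoint

section CDF

variable (μ : Measure ℝ) [IsProbabilityMeasure μ]

theorem continuous_cdf [NullSingletonClass μ] : Continuous (cdf μ) := by
  refine continuous_iff_continuousAt.2 fun x ↦ ?_
  have hjump : ENNReal.ofReal (cdf μ x - Function.leftLim (cdf μ) x) = 0 := by
    rw [← StieltjesFunction.measure_singleton, measure_cdf, measure_singleton]
  rw [(monotone_cdf μ).continuousAt_iff_leftLim_eq_rightLim, StieltjesFunction.rightLim_eq]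
  exact ((monotone_cdf μ).leftLim_le le_rfl).antisymm
    (sub_nonpos.1 (ENNReal.ofReal_eq_zero.1 hjump))

theorem cdf_mem_Ioo [μ.IsOpenPosMeasure] (x : ℝ) : cdf μ x ∈ Ioo 0 1 := by
  have hpos {t : Set ℝ} (ht : (interior t).Nonempty) : 0 < μ.real t :=
    ENNReal.toReal_pos (Measure.measure_pos_of_nonempty_interior μ ht).ne' (measure_ne_top μ t)
  have hlower : 0 < μ.real (Iic x) := hpos (by simp)
  have hupper : 0 < μ.real (Ioi x) := hpos (by simp)
  have hcompl : μ.real (Ioi x) = 1 - μ.real (Iic x) := by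
    rw [← compl_Iic, probReal_compl_eq_one_sub measurableSet_Iic]
  rw [cdf_eq_real]
  exact ⟨hlower, by linarith⟩

end CDF

section Gaussian

variable (μ : ℝ) {v : ℝ≥0}

theorem gaussianPDFReal_le (v : ℝ≥0) (x : ℝ) : gaussianPDFReal μ v x ≤ (√(2 * π * v))⁻¹ := by
  refine mul_le_of_le_one_right (by positivity) (Real.exp_le_one_iff.2 ?_)
  exact div_nonpos_of_nonpos_of_nonneg (neg_nonpos.2 (sq_nonneg _)) (by positivity)

theorem gaussianPDFReal_lt (hv : v ≠ 0) {x : ℝ} (hx : x ≠ μ) :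
    gaussianPDFReal μ v x < (√(2 * π * v))⁻¹ := by
  refine mul_lt_of_lt_one_right (by positivity) (Real.exp_lt_one_iff.2 ?_)
  have : x - μ ≠ 0 := sub_ne_zero.2 hx
  exact div_neg_of_neg_of_pos (neg_neg_of_pos (by positivity)) (by positivity)

theorem cdf_gaussianReal (hv : v ≠ 0) (x : ℝ) :
    cdf (gaussianReal μ v) x = ∫ t in Iic x, gaussianPDFReal μ v t := by
  rw [cdf_eq_real, measureReal_def, gaussianReal_apply_eq_integral μ hv, ENNReal.toReal_ofReal]
  exact integral_nonneg (gaussianPDFReal_nonneg μ v)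

theorem cdf_gaussianReal_sub_lt (hv : v ≠ 0) ⦃x y : ℝ⦄ (hxy : x < y) :
    cdf (gaussianReal μ v) y - cdf (gaussianReal μ v) x < (√(2 * π * v))⁻¹ * (y - x) := by
  have hcont : Continuous (gaussianPDFReal μ v) := by
    unfold gaussianPDFReal
    fun_prop
  have hint := integrable_gaussianPDFReal μ v
  obtain ⟨c, hc, hcμ⟩ : ∃ c ∈ Icc x y, c ≠ μ := (Icc_infinite hxy).nontrivial.exists_ne μ
  calc cdf (gaussianReal μ v) y - cdf (gaussianReal μ v) x
      = ∫ t in x..y, gaussianPDFReal μ v t := by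
        rw [cdf_gaussianReal μ hv, cdf_gaussianReal μ hv,
          intervalIntegral.integral_Iic_sub_Iic hint.integrableOn hint.integrableOn]
    _ < ∫ _ in x..y, (√(2 * π * v))⁻¹ :=
        intervalIntegral.integral_lt_integral_of_continuousOn_of_le_of_exists_lt hxy
          hcont.continuousOn continuousOn_const (fun t _ ↦ gaussianPDFReal_le μ v t)
          ⟨c, hc, gaussianPDFReal_lt μ hv hcμ⟩
    _ = (√(2 * π * v))⁻¹ * (y - x) := by
        rw [intervalIntegral.integral_const, smul_eq_mul, mul_comm]

theorem exists_unique_fixedPoint_cdf_gaussianReal_affine (hv : v ≠ 0) {s : ℝ}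
    (hs : s ≤ √(2 * π * v)) (b : ℝ) :
    ∃ θ ∈ Ioo (0 : ℝ) 1, cdf (gaussianReal μ v) (s * θ + b) = θ ∧
      ∀ θ', cdf (gaussianReal μ v) (s * θ' + b) = θ' → θ' = θ := by
  have := nullSingletonClass_gaussianReal (μ := μ) hv
  have := (gaussianReal_absolutelyContinuous' μ hv).isOpenPosMeasure
  have hslope : s * (√(2 * π * v))⁻¹ ≤ 1 := mul_inv_le_one_of_le₀ hs (by positivity)
  exact exists_mem_Ioo_unique_fixedPoint ((continuous_cdf _).comp (by fun_prop))
    (fun θ ↦ cdf_mem_Ioo _ (s * θ + b))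
    (strictMono_sub_comp_affine (monotone_cdf _) (cdf_gaussianReal_sub_lt μ hv) hslope b).injective

end Gaussian

theorem stdNormalCDF_eq_cdf (x : ℝ) : stdNormalCDF x = cdf (gaussianReal 0 1) x := by
  simp only [stdNormalCDF, cdf_gaussianReal 0 one_ne_zero, gaussianPDFReal, NNReal.coe_one,
    mul_one, sub_zero]

theorem exists_unique_fixedPoint_stdNormalCDF_affine {s : ℝ} (hs : s ≤ √(2 * π)) (b : ℝ) :
    ∃ θ ∈ Ioo (0 : ℝ) 1, stdNormalCDF (s * θ + b) = θ ∧
      ∀ θ', stdNormalCDF (s * θ' + b) = θ' → θ' = θ := by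
  simp only [stdNormalCDF_eq_cdf]
  exact exists_unique_fixedPoint_cdf_gaussianReal_affine 0 one_ne_zero (by simpa using hs) b

theorem div_add_sq_add_sq_div_one_add_div_sq {𝕜 : Type*} [Field 𝕜] {p : 𝕜} (hp : p ≠ 0)
    (x z r : 𝕜) :
    x / (p + z) ^ 2 + r ^ 2 / (1 + z / p) ^ 2 = (x + p ^ 2 * r ^ 2) / (p + z) ^ 2 := by
  rw [one_add_div hp, div_pow, div_div_eq_mul_div, ← add_div, mul_comm (r ^ 2)]

theorem sqrt_sq_div_mul_div_eq_inv_sqrt {a q : ℝ} (ha : 0 < a) (hq : 0 ≤ q) (d : ℝ) :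
    √(a ^ 2 / d) * (q / a) = (√(d / q ^ 2))⁻¹ := by
  rw [← Real.sqrt_inv, inv_div, Real.sqrt_div (sq_nonneg a), Real.sqrt_div (sq_nonneg q),
    Real.sqrt_sq ha.le, Real.sqrt_sq hq, div_mul_div_comm, mul_comm (√d),
    mul_div_mul_left _ _ ha.ne']

theorem stmt_8 (αx αp σμ γ σε : ℝ) (hαx : 0 ≤ αx) (hαp : 0 < αp) (hσμ : 0 ≤ σμ)
    (hγ : 0 < γ) (hσε : 0 < σε)
    (αz α αψ : ℝ) (hαz : αz = αx ^ 2 / (γ ^ 2 * σε ^ 2)) (hα : α = αx + αp + αz)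
    (hαψ : αψ = α ^ 2 / (αx + αp ^ 2 * σμ ^ 2))
    (h : Real.sqrt (αx / (αp + αz) ^ 2 + σμ ^ 2 / (1 + αz / αp) ^ 2) ≥
      1 / Real.sqrt (2 * Real.pi)) :
    ∀ Z xc m : ℝ,
      ∃ θ ∈ Set.Ioo (0 : ℝ) 1,
        stdNormalCDF (Real.sqrt αψ *
          (((αz + αp) / α) * θ - (αz / α) * Z - (αp / α) * m - xc / Real.sqrt α)) = θ ∧
        ∀ θ' : ℝ,
          stdNormalCDF (Real.sqrt αψ *
            (((αz + αp) / α) * θ' - (αz / α) * Z - (αp / α) * m - xc / Real.sqrt α)) = θ' →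
          θ' = θ := by
  intro Z xc m
  have hαz_nonneg : 0 ≤ αz := hαz ▸ by positivity
  have hα_pos : 0 < α := hα ▸ by positivity
  have hslope : √αψ * ((αz + αp) / α) ≤ √(2 * π) := by
    rw [hαψ, add_comm αz, sqrt_sq_div_mul_div_eq_inv_sqrt hα_pos (by positivity),
      ← div_add_sq_add_sq_div_one_add_div_sq hαp.ne']
    exact inv_le_of_inv_le₀ (by positivity) (by simpa only [one_div] using h)
  have haffine (θ : ℝ) :
      √αψ * ((αz + αp) / α * θ - αz / α * Z - αp / α * m - xc / √α) =
        √αψ * ((αz + αp) / α) * θ + -√αψ * (αz / α * Z + αp / α * m + xc / √α) := by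
    ring
  simp only [haffine]
  exact exists_unique_fixedPoint_stdNormalCDF_affine hslope _
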